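/- (Theorem 4.3.) Let k ≥ 0 be an integer and let q, a be complex numbers with 0 < |q| < 1, a q^n ≠ 1 for all n ≥ 1, and a^{2^k} ≠ 1. Then (1/(aq;q)_∞) · ∑_{r=0}^{∞} a^{2r} q^{2r^2 + 2^k r(r-1)/2} · (1 - a^{2^k} q^{r·2^{k+1}}) · (a^{2^k}; q^{2^k})_r · (-1)^r / [(1 - a^{2^k}) (q^{2^k}; q^{2^k})_r] = ∑_{s_1 ≥ s_2 ≥ ⋯ ≥ s_{k+1} ≥ 0} a^{s_1 + s_2} q^{E} / (q;q)_{s_1-s_2} · ∏_{i=3}^{k+2} (-a^{2^{i-3}} q^{2^{i-3}}; q^{2^{i-3}})_{2 s_i} / (q^{2^{i-2}}; q^{2^{i-2}})_{s_{i-1} - s_i}, where E = s_1^2 + s_2^2 + s_2 + s_3 + 2 s_4 + ⋯ + 2^{k-2} s_{k+1} = s_1^2 + s_2^2 + s_2 + ∑_{m=3}^{k+1} 2^{m-3} s_m, with the convention s_{k+2} = 0 (for k = 0 the right side is a single sum over s_1 ≥ 0 with E = s_1^2). -/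

import Mathlib

/-- The finite q-Pochhammer symbol `(x;q)_n = ∏_{j=0}^{n-1} (1 - x q^j)`. -/
noncomputable def qPoch (x q : ℂ) (n : ℕ) : ℂ := ∏ j ∈ Finset.range n, (1 - x * q ^ j)

/-- The infinite q-Pochhammer symbol `(x;q)_∞ = ∏_{j=0}^{∞} (1 - x q^j)`. -/
noncomputable def qPochInf (x q : ℂ) : ℂ := ∏' j : ℕ, (1 - x * q ^ j)

open Finset in
theorem tri_sum (f : ℕ → ℕ → ℂ) (n : ℕ) :
    ∑ m ∈ range (n+1), ∑ r ∈ range (m+1), f m r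
      = ∑ r ∈ range (n+1), ∑ j ∈ range (n - r + 1), f (r+j) r := by
  rw [Finset.sum_sigma', Finset.sum_sigma']
  refine Finset.sum_nbij' (fun p => ⟨p.2, p.1 - p.2⟩) (fun p => ⟨p.1 + p.2, p.1⟩) ?_ ?_ ?_ ?_ ?_
  · rintro ⟨m, r⟩ h
    simp only [mem_sigma, mem_range] at h ⊢
    omega
  · rintro ⟨m, r⟩ h
    simp only [mem_sigma, mem_range] at h ⊢
    omega
  · rintro ⟨m, r⟩ h
    simp only [mem_sigma, mem_range] at h
    have : r + (m - r) = m := by omega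
    simp [this]
  · rintro ⟨m, r⟩ h
    simp
  · rintro ⟨m, r⟩ h
    simp only [mem_sigma, mem_range] at h
    have : r + (m - r) = m := by omega
    simp [this]

theorem qPoch_zero (x q : ℂ) : qPoch x q 0 = 1 := by simp [qPoch]

theorem qPoch_succ (x q : ℂ) (n : ℕ) : qPoch x q (n+1) = qPoch x q n * (1 - x * q^n) := by
  simp [qPoch, Finset.prod_range_succ]

theorem qPoch_add (x q : ℂ) (m n : ℕ) :
    qPoch x q (m+n) = qPoch x q m * qPoch (x*q^m) q n := by
  simp only [qPoch, Finset.prod_range_add]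
  congr 1
  refine Finset.prod_congr rfl fun j _ => ?_
  ring

theorem qPoch_succ_left (x q : ℂ) (n : ℕ) :
    qPoch x q (n+1) = (1 - x) * qPoch (x*q) q n := by
  rw [add_comm, qPoch_add, qPoch_succ, qPoch_zero]; simp

theorem qPoch_sq (x q : ℂ) (n : ℕ) :
    qPoch (x^2) (q^2) n = qPoch x q n * qPoch (-x) q n := by
  simp only [qPoch, ← Finset.prod_mul_distrib]
  refine Finset.prod_congr rfl fun j _ => ?_
  ring

theorem qPoch_ne_zero {x q : ℂ} {n : ℕ} (h : ∀ j, x * q^j ≠ 1) : qPoch x q n ≠ 0 := by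
  rw [qPoch, Finset.prod_ne_zero_iff]
  intro j _ h'
  exact h j (sub_eq_zero.mp h').symm

theorem qpow_ne_one {q : ℂ} (h1 : ‖q‖ < 1) (n : ℕ) (hn : n ≠ 0) : q^n ≠ 1 := by
  intro h
  have := congrArg norm h
  rw [norm_pow, norm_one] at this
  exact absurd this (pow_lt_one₀ (norm_nonneg _) h1 hn).ne

theorem qq_ne_zero {q : ℂ} (h1 : ‖q‖ < 1) (n : ℕ) : qPoch q q n ≠ 0 := by
  apply qPoch_ne_zero
  intro j
  rw [← pow_succ']
  exact qpow_ne_one h1 _ (by omega)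

/-- q-binomial -/
noncomputable def qb (q : ℂ) (N j : ℕ) : ℂ :=
  if j ≤ N then qPoch q q N / (qPoch q q j * qPoch q q (N-j)) else 0

theorem qb_zero {q : ℂ} (h1 : ‖q‖ < 1) (N : ℕ) : qb q N 0 = 1 := by
  have := qq_ne_zero h1 N
  simp [qb, qPoch_zero, this]

theorem qb_self {q : ℂ} (h1 : ‖q‖ < 1) (N : ℕ) : qb q N N = 1 := by
  have := qq_ne_zero h1 N
  simp [qb, qPoch_zero, this]

theorem qb_gt {q : ℂ} {N j : ℕ} (h : N < j) : qb q N j = 0 := by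
  simp [qb, h]

theorem qb_pascalA {q : ℂ} (h1 : ‖q‖ < 1) (N j : ℕ) :
    qb q (N+1) (j+1) = q^(j+1) * qb q N (j+1) + qb q N j := by
  rcases lt_trichotomy N j with h | h | h
  · rw [qb_gt, qb_gt, qb_gt] <;> first | omega | simp
  · subst h
    rw [qb_self h1, qb_gt, qb_self h1] <;> first | omega | simp
  · obtain ⟨i, rfl⟩ : ∃ i, N = j + 1 + i := ⟨N - (j+1), by omega⟩
    simp only [qb]
    rw [if_pos (by omega), if_pos (by omega), if_pos (by omega)]
    have e1 : j + 1 + i + 1 - (j+1) = i + 1 := by omega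
    have e2 : j + 1 + i - (j+1) = i := by omega
    have e3 : j + 1 + i - j = i + 1 := by omega
    rw [e1, e2, e3, qPoch_succ q q (j+1+i), qPoch_succ q q i, qPoch_succ q q j]
    have a1 := qq_ne_zero h1 i
    have a2 := qq_ne_zero h1 j
    have a3 : 1 - q * q^i ≠ 0 := by
      rw [← pow_succ', sub_ne_zero]; exact (qpow_ne_one h1 _ (by omega)).symm
    have a4 : 1 - q * q^j ≠ 0 := by
      rw [← pow_succ', sub_ne_zero]; exact (qpow_ne_one h1 _ (by omega)).symm
    field_simp
    ring

theorem qb_pascalB {q : ℂ} (h1 : ‖q‖ < 1) (N j : ℕ) :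
    qb q (N+1) (j+1) = qb q N (j+1) + q^(N-j) * qb q N j := by
  rcases lt_trichotomy N j with h | h | h
  · rw [qb_gt, qb_gt, qb_gt] <;> first | omega | simp
  · subst h
    rw [qb_self h1, qb_gt, qb_self h1] <;> first | omega | simp
  · obtain ⟨i, rfl⟩ : ∃ i, N = j + 1 + i := ⟨N - (j+1), by omega⟩
    simp only [qb]
    rw [if_pos (by omega), if_pos (by omega), if_pos (by omega)]
    have e1 : j + 1 + i + 1 - (j+1) = i + 1 := by omega
    have e2 : j + 1 + i - (j+1) = i := by omega
    have e3 : j + 1 + i - j = i + 1 := by omega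
    rw [e1, e2, e3, qPoch_succ q q (j+1+i), qPoch_succ q q i, qPoch_succ q q j]
    have a1 := qq_ne_zero h1 i
    have a2 := qq_ne_zero h1 j
    have a3 : 1 - q * q^i ≠ 0 := by
      rw [← pow_succ', sub_ne_zero]; exact (qpow_ne_one h1 _ (by omega)).symm
    have a4 : 1 - q * q^j ≠ 0 := by
      rw [← pow_succ', sub_ne_zero]; exact (qpow_ne_one h1 _ (by omega)).symm
    field_simp
    ring

open Finset in
theorem sumA {q : ℂ} (h1 : ‖q‖ < 1) (N : ℕ) (g : ℕ → ℂ) :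
    ∑ j ∈ range (N+2), qb q (N+1) j * g j
      = ∑ j ∈ range (N+1), qb q N j * (q^j * g j) + ∑ j ∈ range (N+1), qb q N j * g (j+1) := by
  rw [sum_range_succ']
  have h : ∑ j ∈ range (N+1), qb q N j * (q^j * g j) = ∑ j ∈ range (N+2), qb q N j * (q^j * g j) := by
    rw [sum_range_succ _ (N+1), qb_gt (by omega : N < N+1)]; simp
  rw [h, sum_range_succ' _ (N+1)]
  simp only [qb_zero h1, qb_pascalA h1, add_mul, sum_add_distrib, pow_zero, one_mul]
  have : ∀ j, q^(j+1) * qb q N (j+1) * g (j+1) = qb q N (j+1) * (q^(j+1) * g (j+1)) := by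
    intro j; ring
  simp only [this]
  ring

open Finset in
theorem sumB {q : ℂ} (h1 : ‖q‖ < 1) (N : ℕ) (g : ℕ → ℂ) :
    ∑ j ∈ range (N+2), qb q (N+1) j * g j
      = ∑ j ∈ range (N+1), qb q N j * g j + ∑ j ∈ range (N+1), qb q N j * (q^(N-j) * g (j+1)) := by
  rw [sum_range_succ']
  have h : ∑ j ∈ range (N+1), qb q N j * g j = ∑ j ∈ range (N+2), qb q N j * g j := by
    rw [sum_range_succ _ (N+1), qb_gt (by omega : N < N+1)]; simp
  rw [h, sum_range_succ' _ (N+1)]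
  simp only [qb_zero h1, qb_pascalB h1, add_mul, sum_add_distrib, one_mul]
  have : ∀ j, q^(N-j) * qb q N j * g (j+1) = qb q N j * (q^(N-j) * g (j+1)) := by
    intro j; ring
  simp only [this]
  ring

open Finset in
theorem vand {q : ℂ} (h1 : ‖q‖ < 1) (N : ℕ) : ∀ b : ℂ,
    ∑ j ∈ range (N+1), qb q N j * (b^j * q^(j^2) * qPoch (b*q^(j+1)) q (N-j)) = 1 := by
  induction N with
  | zero => intro b; simp [qb_self h1, qPoch_zero]
  | succ N ih =>
    intro b
    rw [sumB h1]
    have e1 : ∑ j ∈ range (N+1), qb q N j * (b^j * q^(j^2) * qPoch (b*q^(j+1)) q (N+1-j))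
        = (1 - b*q^(N+1)) * ∑ j ∈ range (N+1), qb q N j * (b^j * q^(j^2) * qPoch (b*q^(j+1)) q (N-j)) := by
      rw [mul_sum]
      refine sum_congr rfl fun j hj => ?_
      rw [mem_range] at hj
      obtain ⟨i, rfl⟩ : ∃ i, N = j + i := ⟨N - j, by omega⟩
      have e1 : j + i + 1 - j = i + 1 := by omega
      have e2 : j + i - j = i := by omega
      rw [e1, e2, qPoch_succ]
      ring
    have e2 : ∑ j ∈ range (N+1), qb q N j * (q^(N-j) * (b^(j+1) * q^((j+1)^2) * qPoch (b*q^(j+1+1)) q (N+1-(j+1))))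
        = (b*q^(N+1)) * ∑ j ∈ range (N+1), qb q N j * ((b*q)^j * q^(j^2) * qPoch ((b*q)*q^(j+1)) q (N-j)) := by
      rw [mul_sum]
      refine sum_congr rfl fun j hj => ?_
      rw [mem_range] at hj
      obtain ⟨i, rfl⟩ : ∃ i, N = j + i := ⟨N - j, by omega⟩
      have e1 : j + i + 1 - (j+1) = i := by omega
      have e2 : j + i - j = i := by omega
      have e3 : b * q^(j+1+1) = b*q*q^(j+1) := by ring
      rw [e1, e2, e3]
      ring
    rw [e1, e2, ih, ih]
    ring

open Finset in
theorem quad {q : ℂ} (h1 : ‖q‖ < 1) (N : ℕ) : ∀ b : ℂ,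
    ∑ j ∈ range (N+1), qb (q^2) N j * (q^(N-j) * qPoch (-(b*q^(j+1))) q j * qPoch (b*q^(j+1)) q (N-j))
        = qPoch (-q) q N ∧
    ∑ j ∈ range (N+1), qb (q^2) N j * (q^(3*(N-j)) * qPoch (-(b*q^(j+1))) q j * qPoch (b*q^(j+1)) q (N-j))
        = (1 - q + q^(N+1) + b*q^(N+1)*(1-q^N)) * qPoch (-q) q N := by
  have h2 : ‖q^2‖ < 1 := by
    rw [norm_pow]; exact pow_lt_one₀ (norm_nonneg _) h1 (by norm_num)
  induction N with
  | zero => intro b; simp [qb_self h2, qPoch_zero]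
  | succ N ih =>
    intro b
    have key : ∀ j, qPoch (-(b*q^(j+1+1))) q (j+1) =
        qPoch (-((b*q)*q^(j+1))) q j * (1 + b * q^(2*j+2)) := by
      intro j
      have e3 : b * q^(j+1+1) = b*q*q^(j+1) := by ring
      rw [qPoch_succ, e3]
      ring
    constructor
    · rw [sumB h2]
      have e1 : ∑ j ∈ range (N+1), qb (q^2) N j * (q^(N+1-j) * qPoch (-(b*q^(j+1))) q j * qPoch (b*q^(j+1)) q (N+1-j))
          = q * (1 - b*q^(N+1)) * ∑ j ∈ range (N+1), qb (q^2) N j * (q^(N-j) * qPoch (-(b*q^(j+1))) q j * qPoch (b*q^(j+1)) q (N-j)) := by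
        rw [mul_sum]
        refine sum_congr rfl fun j hj => ?_
        rw [mem_range] at hj
        obtain ⟨i, rfl⟩ : ∃ i, N = j + i := ⟨N - j, by omega⟩
        have e1 : j + i + 1 - j = i + 1 := by omega
        have e2 : j + i - j = i := by omega
        rw [e1, e2, qPoch_succ _ _ i]
        ring
      have e2 : ∑ j ∈ range (N+1), qb (q^2) N j * ((q^2)^(N-j) * (q^(N+1-(j+1)) * qPoch (-(b*q^(j+1+1))) q (j+1) * qPoch (b*q^(j+1+1)) q (N+1-(j+1))))
          = ∑ j ∈ range (N+1), qb (q^2) N j * (q^(3*(N-j)) * qPoch (-((b*q)*q^(j+1))) q j * qPoch ((b*q)*q^(j+1)) q (N-j))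
           + b*q^(2*N+2) * ∑ j ∈ range (N+1), qb (q^2) N j * (q^(N-j) * qPoch (-((b*q)*q^(j+1))) q j * qPoch ((b*q)*q^(j+1)) q (N-j)) := by
        rw [mul_sum, ← sum_add_distrib]
        refine sum_congr rfl fun j hj => ?_
        rw [mem_range] at hj
        obtain ⟨i, rfl⟩ : ∃ i, N = j + i := ⟨N - j, by omega⟩
        have e1 : j + i + 1 - (j + 1) = i := by omega
        have e2 : j + i - j = i := by omega
        have e3 : b * q^(j+1+1) = b*q*q^(j+1) := by ring
        rw [key, e1, e2, e3]
        ring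
      rw [e1, e2, (ih b).1, (ih (b*q)).1, (ih (b*q)).2, qPoch_succ]
      ring
    · rw [sumA h2]
      have e1 : ∑ j ∈ range (N+1), qb (q^2) N j * ((q^2)^j * (q^(3*(N+1-j)) * qPoch (-(b*q^(j+1))) q j * qPoch (b*q^(j+1)) q (N+1-j)))
          = q^(2*N+3) * (1 - b*q^(N+1)) * ∑ j ∈ range (N+1), qb (q^2) N j * (q^(N-j) * qPoch (-(b*q^(j+1))) q j * qPoch (b*q^(j+1)) q (N-j)) := by
        rw [mul_sum]
        refine sum_congr rfl fun j hj => ?_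
        rw [mem_range] at hj
        obtain ⟨i, rfl⟩ : ∃ i, N = j + i := ⟨N - j, by omega⟩
        have e1 : j + i + 1 - j = i + 1 := by omega
        have e2 : j + i - j = i := by omega
        rw [e1, e2, qPoch_succ _ _ i]
        ring
      have e2 : ∑ j ∈ range (N+1), qb (q^2) N j * (q^(3*(N+1-(j+1))) * qPoch (-(b*q^(j+1+1))) q (j+1) * qPoch (b*q^(j+1+1)) q (N+1-(j+1)))
          = ∑ j ∈ range (N+1), qb (q^2) N j * (q^(3*(N-j)) * qPoch (-((b*q)*q^(j+1))) q j * qPoch ((b*q)*q^(j+1)) q (N-j))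
           + b*q^(2*N+2) * ∑ j ∈ range (N+1), qb (q^2) N j * (q^(N-j) * qPoch (-((b*q)*q^(j+1))) q j * qPoch ((b*q)*q^(j+1)) q (N-j)) := by
        rw [mul_sum, ← sum_add_distrib]
        refine sum_congr rfl fun j hj => ?_
        rw [mem_range] at hj
        obtain ⟨i, rfl⟩ : ∃ i, N = j + i := ⟨N - j, by omega⟩
        have e1 : j + i + 1 - (j + 1) = i := by omega
        have e2 : j + i - j = i := by omega
        have e3 : b * q^(j+1+1) = b*q*q^(j+1) := by ring
        rw [key, e1, e2, e3]
        ring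
      rw [e1, e2, (ih b).1, (ih (b*q)).1, (ih (b*q)).2, qPoch_succ]
      ring

open Finset in
theorem kernel1 {q : ℂ} (h1 : ‖q‖ < 1) (N : ℕ) (b : ℂ) (hb : ∀ n : ℕ, 1 ≤ n → b * q^n ≠ 1) :
    ∑ j ∈ range (N+1), b^j * q^(j^2) / (qPoch q q (N-j) * qPoch q q j * qPoch (b*q) q j)
      = 1 / (qPoch q q N * qPoch (b*q) q N) := by
  have hb' : ∀ n, qPoch (b*q) q n ≠ 0 := fun n => qPoch_ne_zero fun j => by
    rw [mul_assoc, ← pow_succ']; exact hb _ (by omega)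
  rw [← vand h1 N b, sum_div]
  refine sum_congr rfl fun j hj => ?_
  rw [mem_range] at hj
  obtain ⟨i, rfl⟩ : ∃ i, N = j + i := ⟨N - j, by omega⟩
  have e2 : j + i - j = i := by omega
  have e3 : b * q^(j+1) = b*q*q^j := by ring
  have h3 := hb' (j+i)
  rw [qPoch_add] at h3
  rw [qb, if_pos (by omega), e2, qPoch_add (b*q), e3]
  have a1 := qq_ne_zero h1 i
  have a2 := qq_ne_zero h1 j
  have a3 := qq_ne_zero h1 (j+i)
  have a4 := left_ne_zero_of_mul h3
  have a5 := right_ne_zero_of_mul h3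
  field_simp

open Finset in
theorem kernel2 {q : ℂ} (h1 : ‖q‖ < 1) (N : ℕ) (b : ℂ)
    (hb : ∀ n : ℕ, 1 ≤ n → b^2 * (q^2)^n ≠ 1) :
    ∑ j ∈ range (N+1), qPoch (-(b*q)) q (2*j) * q^(N-j) /
        (qPoch (q^2) (q^2) (N-j) * qPoch (q^2) (q^2) j * qPoch (b^2*q^2) (q^2) j)
      = 1 / (qPoch q q N * qPoch (b*q) q N) := by
  have h2 : ‖q^2‖ < 1 := by
    rw [norm_pow]; exact pow_lt_one₀ (norm_nonneg _) h1 (by norm_num)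
  have hb' : ∀ n, qPoch (b^2*q^2) (q^2) n ≠ 0 := fun n => qPoch_ne_zero fun j => by
    rw [mul_assoc, ← pow_succ']; exact hb _ (by omega)
  have key : (1:ℂ) / (qPoch q q N * qPoch (b*q) q N)
     = qPoch (-q) q N / (qPoch (q^2) (q^2) N * qPoch (b*q) q N) := by
    have := qq_ne_zero h2 N
    rw [qPoch_sq] at this ⊢
    have a4 := left_ne_zero_of_mul this
    have a5 := right_ne_zero_of_mul this
    have h3 := hb' N
    rw [← mul_pow, qPoch_sq] at h3
    have a6 := left_ne_zero_of_mul h3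
    field_simp
  rw [key, ← (quad h1 N b).1, sum_div]
  refine sum_congr rfl fun j hj => ?_
  rw [mem_range] at hj
  obtain ⟨i, rfl⟩ : ∃ i, N = j + i := ⟨N - j, by omega⟩
  have e2 : j + i - j = i := by omega
  have e3 : b * q^(j+1) = b*q*q^j := by ring
  have h3 := hb' (j+i)
  rw [← mul_pow, qPoch_sq] at h3
  have h4 := left_ne_zero_of_mul h3
  have h5 := right_ne_zero_of_mul h3
  rw [qPoch_add] at h4 h5
  have a1 := qq_ne_zero h2 i
  have a2 := qq_ne_zero h2 j
  have a3 := qq_ne_zero h2 (j+i)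
  have a4 := left_ne_zero_of_mul h4
  have a5 := right_ne_zero_of_mul h4
  have a6 := left_ne_zero_of_mul h5
  rw [qb, if_pos (by omega), e2, qPoch_add (b*q), e3, ← mul_pow, qPoch_sq (b*q), two_mul,
    qPoch_add (-(b*q))]
  rw [neg_mul]
  field_simp

noncomputable def bU (a q : ℂ) (r : ℕ) : ℂ :=
  qPoch a q r * (1 - a * q^(2*r)) * (-1)^r * q^(r*(r-1)/2) / ((1-a) * qPoch q q r)

noncomputable def bMf : ℕ → ℕ → ℂ → ℂ → ℂ
  | 0, n, _, _ => if n = 0 then 1 else 0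
  | k+1, n, a, q => ∑ m ∈ Finset.range (n+1),
      qPoch (-(a*q)) q (2*m) * q^(n-m) / qPoch (q^2) (q^2) (n-m) * bMf k m (a^2) (q^2)

noncomputable def bBeta (α : ℕ → ℂ) (a q : ℂ) (n : ℕ) : ℂ :=
  ∑ r ∈ Finset.range (n+1), α r / (qPoch q q (n-r) * qPoch (a*q) q (n+r))

theorem aq_ne {a q : ℂ} (ha : ∀ n : ℕ, 1 ≤ n → a * q^n ≠ 1) (n : ℕ) : qPoch (a*q) q n ≠ 0 :=
  qPoch_ne_zero fun j => by
    rw [mul_assoc, ← pow_succ']; exact ha _ (by omega)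

open Finset in
theorem bailey1 {a q : ℂ} (h1 : ‖q‖ < 1) (ha : ∀ n : ℕ, 1 ≤ n → a * q^n ≠ 1) (α : ℕ → ℂ) (N : ℕ) :
    ∑ m ∈ range (N+1), a^m * q^(m^2) / qPoch q q (N-m) * bBeta α a q m
      = bBeta (fun r => a^r * q^(r^2) * α r) a q N := by
  simp only [bBeta, mul_sum]
  rw [tri_sum]
  refine sum_congr rfl fun r hr => ?_
  rw [mem_range] at hr
  have hb : ∀ n : ℕ, 1 ≤ n → (a * q^(2*r)) * q^n ≠ 1 := by
    intro n hn
    rw [mul_assoc, ← pow_add]; exact ha _ (by omega)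
  have hk := kernel1 h1 (N-r) _ hb
  have e0 : N + r = 2*r + (N - r) := by omega
  have e1 : a * q^(2*r) * q = a*q*q^(2*r) := by ring
  have : a^r * q^(r^2) * α r / (qPoch q q (N-r) * qPoch (a*q) q (N+r))
     = a^r * q^(r^2) * α r / qPoch (a*q) q (2*r) *
        (1 / (qPoch q q (N-r) * qPoch (a * q^(2*r) * q) q (N-r))) := by
    have h3 := aq_ne ha (2*r + (N-r))
    rw [qPoch_add] at h3
    rw [e0, qPoch_add, e1]
    have a4 := left_ne_zero_of_mul h3
    have a5 := right_ne_zero_of_mul h3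
    have a6 := qq_ne_zero h1 (N-r)
    field_simp
  rw [this, ← hk, mul_sum]
  refine sum_congr rfl fun j hj => ?_
  rw [mem_range] at hj
  have e2 : N - (r+j) = N - r - j := by omega
  have e3 : r + j - r = j := by omega
  have e4 : r + j + r = 2*r + j := by omega
  have h3 := aq_ne ha (2*r + j)
  rw [qPoch_add] at h3
  rw [e2, e3, e4, e1, qPoch_add]
  have a4 := left_ne_zero_of_mul h3
  have a5 := right_ne_zero_of_mul h3
  have a6 := qq_ne_zero h1 (N-r-j)
  have a7 := qq_ne_zero h1 j
  field_simp
  ring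

open Finset in
theorem bailey2 {a q : ℂ} (h1 : ‖q‖ < 1) (ha : ∀ n : ℕ, 1 ≤ n → a^2 * (q^2)^n ≠ 1)
    (α : ℕ → ℂ) (N : ℕ) :
    ∑ m ∈ range (N+1), qPoch (-(a*q)) q (2*m) * q^(N-m) / qPoch (q^2) (q^2) (N-m)
        * bBeta α (a^2) (q^2) m
      = bBeta α a q N := by
  have h2 : ‖q^2‖ < 1 := by
    rw [norm_pow]; exact pow_lt_one₀ (norm_nonneg _) h1 (by norm_num)
  simp only [bBeta, mul_sum]
  rw [tri_sum]
  refine sum_congr rfl fun r hr => ?_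
  rw [mem_range] at hr
  have hb : ∀ n : ℕ, 1 ≤ n → (a * q^(2*r))^2 * (q^2)^n ≠ 1 := by
    intro n hn
    have := ha (2*r+n) (by omega)
    intro h
    apply this
    rw [← h]; ring
  have hk := kernel2 h1 (N-r) _ hb
  have hn := aq_ne ha
  have hs : ∀ n, qPoch (a^2*q^2) (q^2) n = qPoch (a*q) q n * qPoch (-(a*q)) q n := by
    intro n; rw [← mul_pow, qPoch_sq]
  have ha' : ∀ n, qPoch (a*q) q n ≠ 0 := fun n => by
    have := hn n; rw [hs] at this; exact left_ne_zero_of_mul this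
  have ha'' : ∀ n, qPoch (-(a*q)) q n ≠ 0 := fun n => by
    have := hn n; rw [hs] at this; exact right_ne_zero_of_mul this
  have e0 : N + r = 2*r + (N - r) := by omega
  have e1 : a * q^(2*r) * q = a*q*q^(2*r) := by ring
  have : α r / (qPoch q q (N-r) * qPoch (a*q) q (N+r))
     = α r / qPoch (a*q) q (2*r) *
        (1 / (qPoch q q (N-r) * qPoch (a * q^(2*r) * q) q (N-r))) := by
    have h3 := ha' (2*r + (N-r))
    rw [qPoch_add] at h3
    rw [e0, qPoch_add, e1]
    have a4 := left_ne_zero_of_mul h3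
    have a5 := right_ne_zero_of_mul h3
    have a6 := qq_ne_zero h1 (N-r)
    field_simp
  rw [this, ← hk, mul_sum]
  refine sum_congr rfl fun j hj => ?_
  rw [mem_range] at hj
  have e2 : N - (r+j) = N - r - j := by omega
  have e3 : r + j - r = j := by omega
  have e4 : r + j + r = 2*r + j := by omega
  have e5 : 2*(r+j) = 2*r + 2*j := by omega
  have e6 : (a * q^(2*r))^2 * q^2 = (a*q*q^(2*r))^2 := by ring
  have h3 := ha' (2*r + j)
  rw [qPoch_add] at h3
  have h4 := ha'' (2*r + j)
  rw [qPoch_add] at h4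
  rw [e2, e3, e4, e5, e1, e6, hs, qPoch_sq (a*q*q^(2*r)), qPoch_add (a*q), qPoch_add (-(a*q)) q (2*r) (2*j),
    qPoch_add (-(a*q)) q (2*r) j]
  rw [neg_mul] at h4 ⊢
  have a4 := left_ne_zero_of_mul h3
  have a5 := right_ne_zero_of_mul h3
  have a4' := left_ne_zero_of_mul h4
  have a5' := right_ne_zero_of_mul h4
  have a6 := qq_ne_zero h2 (N-r-j)
  have a7 := qq_ne_zero h2 j
  field_simp

open Finset in
theorem unit_partial {a q : ℂ} (h1 : ‖q‖ < 1) (ha : ∀ n : ℕ, a * q^n ≠ 1) (n : ℕ) (hn : 1 ≤ n)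
    (R : ℕ) : R ≤ n →
    ∑ r ∈ range (R+1), bU a q r / (qPoch q q (n-r) * qPoch (a*q) q (n+r))
      = (-1)^R * q^(R*(R-1)/2) * q^R * qPoch (a*q) q R * (1 - q^(n-R)) /
        (qPoch q q R * qPoch q q (n-R) * (1 - q^n) * qPoch (a*q) q (n+R)) := by
  have h1a : 1 - a ≠ 0 := by
    have := ha 0
    rw [sub_ne_zero]; simpa using this.symm
  have haq := aq_ne (fun n _ => ha n)
  have hq : ∀ m, 1 ≤ m → 1 - q^m ≠ 0 := fun m hm => by
    rw [sub_ne_zero]; exact (qpow_ne_one h1 _ (by omega)).symm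
  induction R with
  | zero =>
    intro _
    have a1 := hq n hn
    have a2 := haq n
    have a3 := qq_ne_zero h1 n
    simp [bU, qPoch_zero]
    field_simp
  | succ R ih =>
    intro hR
    rw [sum_range_succ, ih (by omega)]
    obtain ⟨i, rfl⟩ : ∃ i, n = R + 1 + i := ⟨n - (R+1), by omega⟩
    have e1 : R + 1 + i - R = i + 1 := by omega
    have e2 : R + 1 + i - (R+1) = i := by omega
    rw [bU, e1, e2, Nat.triangle_succ, qPoch_succ_left a, ← add_assoc (R+1+i) R 1,
      qPoch_succ (a*q) q (R+1+i+R), qPoch_succ q q i, qPoch_succ q q R, qPoch_succ (a*q) q R]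
    have a1 := hq (R+1+i) (by omega)
    have a2 := haq (R+1+i+R)
    have a3 := qq_ne_zero h1 i
    have a4 := qq_ne_zero h1 R
    have a5 := hq (i+1) (by omega)
    have a6 := hq (R+1) (by omega)
    rw [pow_succ'] at a5 a6
    have a7 : 1 - a * q * q^(R+1+i+R) ≠ 0 := by
      rw [sub_ne_zero, mul_assoc, ← pow_succ']
      exact (ha _).symm
    have p0 : q^(i+1) = q * q^i := pow_succ' _ _
    have p1 : q^(R+1+i) = q^R * q * q^i := by ring
    have p2 : q^(R+1+i+R) = q^R * q * q^i * q^R := by ring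
    have p3 : q^(2*(R+1)) = q^R * q * (q^R * q) := by ring
    have p4 : q^(R+1) = q * q^R := pow_succ' _ _
    have p5 : q^(R*(R-1)/2+R) = q^(R*(R-1)/2) * q^R := pow_add _ _ _
    rw [p1] at a1
    rw [p2] at a7
    rw [p0, p1, p2, p3, p4, p5, pow_succ (-1 : ℂ)]
    generalize q^R = x at *
    generalize q^i = y at *
    rw [div_div, div_add_div _ _ (by positivity) (by positivity), div_eq_div_iff (by positivity) (by positivity)]
    ring

open Finset in
theorem unit_beta {a q : ℂ} (h1 : ‖q‖ < 1) (ha : ∀ n : ℕ, a * q^n ≠ 1) (n : ℕ) :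
    bBeta (bU a q) a q n = if n = 0 then 1 else 0 := by
  rcases Nat.eq_zero_or_pos n with h | h
  · subst h
    have h1a : 1 - a ≠ 0 := by
      have := ha 0
      rw [sub_ne_zero]; simpa using this.symm
    simp [bBeta, bU, qPoch_zero, h1a]
  · rw [bBeta, unit_partial h1 ha n h n le_rfl, if_neg (by omega)]
    simp

theorem main_beta (k : ℕ) : ∀ (a q : ℂ), ‖q‖ < 1 → (∀ n : ℕ, a^2^k * (q^2^k)^n ≠ 1) → ∀ n : ℕ,
    bBeta (bU (a^2^k) (q^2^k)) a q n = bMf k n a q := by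
  induction k with
  | zero =>
    intro a q h1 ha n
    have := unit_beta (a := a) h1 (by simpa using ha) n
    simpa [bMf] using this
  | succ k ih =>
    intro a q h1 ha n
    have h2 : ‖q^2‖ < 1 := by
      rw [norm_pow]; exact pow_lt_one₀ (norm_nonneg _) h1 (by norm_num)
    have e : ∀ x : ℂ, x^2^(k+1) = (x^2)^2^k := fun x => by rw [← pow_mul, pow_succ']
    simp only [e] at ha ⊢
    rw [bMf, ← bailey2 h1]
    · refine Finset.sum_congr rfl fun m _ => ?_
      rw [ih _ _ h2 ha]
    · intro n _ h
      apply ha n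
      have := congrArg (fun x => x^2^k) h
      simp only [one_pow, mul_pow] at this
      rw [← this]
      ring

theorem bMf_cont (k : ℕ) : ∀ (n : ℕ) (q : ℂ), Continuous (fun a => bMf k n a q) := by
  induction k with
  | zero => intro n q; simp only [bMf]; exact continuous_const
  | succ k ih =>
    intro n q
    simp only [bMf, qPoch]
    refine continuous_finsetSum _ fun m _ => ?_
    refine Continuous.mul ?_ ((ih m (q^2)).comp (continuous_pow 2))
    fun_prop

theorem main_beta' (k : ℕ) (a q : ℂ) (h0 : 0 < ‖q‖) (h1 : ‖q‖ < 1)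
    (ha : ∀ n : ℕ, 1 ≤ n → a * q ^ n ≠ 1) (ha2 : a ^ (2 ^ k) ≠ 1) (n : ℕ) :
    bBeta (bU (a^2^k) (q^2^k)) a q n = bMf k n a q := by
  let S : Set ℂ := ⋃ n : ℕ, {x : ℂ | x^2^k * (q^2^k)^n = 1}
  have hq0 : q ≠ 0 := norm_pos_iff.mp h0
  have hS : S.Countable := by
    refine Set.countable_iUnion fun n => Set.Finite.countable ?_
    refine Set.Finite.subset (Multiset.toFinset (Polynomial.nthRoots (2^k) (((q^2^k)^n)⁻¹))).finite_toSet ?_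
    intro x hx
    simp only [Set.mem_ofPred_eq] at hx
    simp only [Finset.mem_coe, Multiset.mem_toFinset]
    rw [Polynomial.mem_nthRoots (by positivity)]
    exact eq_inv_of_mul_eq_one_left hx
  have hd : Dense Sᶜ := hS.dense_compl ℝ
  have : (nhdsWithin a Sᶜ).NeBot := mem_closure_iff_nhdsWithin_neBot.mp (hd a)
  have hqk : ‖q^2^k‖ < 1 := by
    rw [norm_pow]; exact pow_lt_one₀ (norm_nonneg _) h1 (by positivity)
  have hc : ContinuousAt (fun x => bBeta (bU (x^2^k) (q^2^k)) x q n) a := by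
    have : ∀ r, ContinuousAt (fun x => bU (x^2^k) (q^2^k) r / (qPoch q q (n-r) * qPoch (x*q) q (n+r))) a := by
      intro r
      refine ContinuousAt.div ?_ ?_ ?_
      · simp only [bU]
        refine ContinuousAt.div ?_ ?_ ?_
        · simp only [qPoch]; fun_prop
        · simp only [qPoch]; fun_prop
        · exact mul_ne_zero (sub_ne_zero.mpr ha2.symm) (qq_ne_zero hqk r)
      · simp only [qPoch]; fun_prop
      · exact mul_ne_zero (qq_ne_zero h1 _) (aq_ne ha _)
    simp only [bBeta]
    exact tendsto_finsetSum _ fun r _ => this r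
  have t1 := hc.tendsto.mono_left (nhdsWithin_le_nhds (s := Sᶜ))
  have t2 := ((bMf_cont k n q).continuousAt (x := a)).tendsto.mono_left (nhdsWithin_le_nhds (s := Sᶜ))
  refine tendsto_nhds_unique_of_eventuallyEq t1 t2 ?_
  filter_upwards [self_mem_nhdsWithin] with x hx
  apply main_beta k x q h1
  intro n hn
  exact hx (Set.mem_iUnion.mpr ⟨n, hn⟩)

def bPad (k : ℕ) (s : Fin (k+1) → ℕ) : ℕ → ℕ := fun m => if h : m < k + 1 then s ⟨m, h⟩ else 0

open Classical in
noncomputable def bT (k n : ℕ) : Finset (Fin (k+1) → ℕ) :=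
  (Fintype.piFinset (fun _ : Fin (k+1) => Finset.range (n+1))).filter
    (fun s => Antitone s ∧ s 0 = n)

theorem mem_bT {k n : ℕ} {s : Fin (k+1) → ℕ} : s ∈ bT k n ↔ Antitone s ∧ s 0 = n := by
  classical
  simp only [bT, Finset.mem_filter, Fintype.mem_piFinset, Finset.mem_range, and_iff_right_iff_imp]
  rintro ⟨h, rfl⟩ i
  exact Nat.lt_succ_of_le (h (Fin.zero_le i))

theorem card_bT (k n : ℕ) : (bT k n).card ≤ (n+1)^(k+1) := by
  classical
  refine (Finset.card_filter_le _ _).trans ?_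
  simp

theorem bPad_zero (k : ℕ) (s : Fin (k+1) → ℕ) : bPad k s 0 = s 0 := by simp [bPad]

theorem bPad_cons_succ (k n m : ℕ) (s : Fin (k+1) → ℕ) :
    bPad (k+1) (Fin.cons n s : Fin (k+2) → ℕ) (m+1) = bPad k s m := by
  by_cases h : m < k + 1
  · have h' : m + 1 < k + 1 + 1 := by omega
    simp only [bPad, h, h', dif_pos]
    exact Fin.cons_succ (α := fun _ => ℕ) n s ⟨m, h⟩
  · have h' : ¬ (m + 1 < k + 1 + 1) := by omega
    simp only [bPad, h, h', dif_neg, not_false_eq_true]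

theorem bPad_anti {k : ℕ} {s : Fin (k+1) → ℕ} (h : Antitone s) : Antitone (bPad k s) := by
  intro i j hij
  by_cases hj : j < k + 1
  · have hi : i < k + 1 := by omega
    simp only [bPad, hi, hj, dif_pos]
    exact h (by simpa using hij)
  · simp [bPad, hj]

theorem sum_bT_zero (n : ℕ) (f : (Fin 1 → ℕ) → ℂ) : ∑ s ∈ bT 0 n, f s = f (fun _ => n) := by
  have : bT 0 n = {fun _ => n} := by
    ext s
    rw [mem_bT, Finset.mem_singleton]
    constructor
    · rintro ⟨_, h⟩
      ext i
      rw [← h]; congr 1; exact Fin.fin_one_eq_zero i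
    · rintro rfl
      exact ⟨antitone_const, rfl⟩
  rw [this, Finset.sum_singleton]

theorem sum_bT_succ (k n : ℕ) (f : (Fin (k+2) → ℕ) → ℂ) :
    ∑ s ∈ bT (k+1) n, f s = ∑ m ∈ Finset.range (n+1), ∑ s ∈ bT k m, f (Fin.cons n s) := by
  rw [Finset.sum_sigma']
  refine Finset.sum_bij' (fun s _ => ⟨s 1, fun i => s i.succ⟩)
    (fun p _ => (Fin.cons n p.2 : Fin (k+2) → ℕ)) ?_ ?_ ?_ ?_ ?_
  · intro s hs
    rw [mem_bT] at hs
    simp only [Finset.mem_sigma, Finset.mem_range, mem_bT]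
    refine ⟨?_, ?_, ?_⟩
    · rw [← hs.2]; exact Nat.lt_succ_of_le (hs.1 (Fin.zero_le _))
    · intro i j hij
      exact hs.1 (Fin.succ_le_succ_iff.mpr hij)
    · rfl
  · rintro ⟨m, s⟩ hs
    simp only [Finset.mem_sigma, Finset.mem_range, mem_bT] at hs ⊢
    refine ⟨?_, rfl⟩
    rw [Fin.antitone_iff_succ_le]
    intro i
    refine Fin.cases ?_ (fun i => ?_) i
    · have : (s 0) ≤ n := by omega
      simpa using this
    · have : s i.succ ≤ s i.castSucc := hs.2.1 (Fin.castSucc_le_succ i)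
      simpa [← Fin.succ_castSucc] using this
  · intro s hs
    rw [mem_bT] at hs
    ext i
    refine Fin.cases ?_ (fun i => ?_) i
    · simp [hs.2]
    · simp
  · rintro ⟨m, s⟩ hs
    simp only [Finset.mem_sigma, Finset.mem_range, mem_bT] at hs
    have h1 : (Fin.cons n s : Fin (k+2) → ℕ) 1 = m := hs.2.2
    have h2 : (fun i : Fin (k+1) => (Fin.cons n s : Fin (k+2) → ℕ) i.succ) = s := by
      ext i; simp
    simp only [h1, h2]
  · intro s hs
    rw [mem_bT] at hs
    congr 1
    ext i
    refine Fin.cases ?_ (fun i => ?_) i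
    · simp [hs.2]
    · simp

noncomputable def bW (k : ℕ) (a q : ℂ) (t : ℕ → ℕ) : ℂ :=
  q^(t 0 + ∑ m ∈ Finset.range k, 2^m * t (m+1)) *
    ∏ j ∈ Finset.range (k+1), qPoch (-(a^2^j * q^2^j)) (q^2^j) (2 * t (j+1)) /
      qPoch (q^2^(j+1)) (q^2^(j+1)) (t j - t (j+1))

theorem bW_succ (k : ℕ) (a q : ℂ) (t : ℕ → ℕ) (ht : t 1 ≤ t 0) :
    bW (k+1) a q t = qPoch (-(a*q)) q (2*t 1) * q^(t 0 - t 1) / qPoch (q^2) (q^2) (t 0 - t 1) *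
      bW k (a^2) (q^2) (fun m => t (m+1)) := by
  have e : ∀ (x : ℂ) (j : ℕ), x^2^(j+1) = (x^2)^2^j := fun x j => by rw [← pow_mul, pow_succ']
  rw [bW, Finset.prod_range_succ', Finset.sum_range_succ', bW]
  simp only [pow_zero, pow_one, zero_add, one_mul]
  have e1 : t 0 + (∑ m ∈ Finset.range k, 2^(m+1) * t (m+1+1) + t 1)
     = (t 0 - t 1) + 2 * (t 1 + ∑ m ∈ Finset.range k, 2^m * t (m+1+1)) := by
    rw [mul_add, Finset.mul_sum]
    have : ∀ m, 2^(m+1) * t (m+1+1) = 2 * (2^m * t (m+1+1)) := fun m => by ring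
    simp only [this]
    omega
  rw [e1, pow_add, pow_mul q 2]
  simp only [e]
  ring

theorem bMf_eq (k : ℕ) : ∀ (n : ℕ) (a q : ℂ),
    bMf (k+1) n a q = ∑ s ∈ bT k n, bW k a q (bPad k s) := by
  induction k with
  | zero =>
    intro n a q
    rw [sum_bT_zero, bMf, Finset.sum_eq_single 0]
    · simp [bMf, bW, bPad, qPoch_zero]
      ring
    · intro m _ hm
      simp [bMf, hm]
    · simp
  | succ k ih =>
    intro n a q
    rw [sum_bT_succ, bMf]
    refine Finset.sum_congr rfl fun m hm => ?_
    rw [Finset.mem_range] at hm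
    rw [ih, Finset.mul_sum]
    refine Finset.sum_congr rfl fun s hs => ?_
    rw [mem_bT] at hs
    have h0 : bPad (k+1) (Fin.cons n s : Fin (k+2) → ℕ) 0 = n := by rw [bPad_zero]; rfl
    have h1 : bPad (k+1) (Fin.cons n s : Fin (k+2) → ℕ) 1 = m := by
      rw [bPad_cons_succ, bPad_zero, hs.2]
    rw [bW_succ _ _ _ _ (by rw [h0, h1]; omega), h0, h1]
    simp only [bPad_cons_succ]

noncomputable def bF (k : ℕ) (a q : ℂ) (t : ℕ → ℕ) : ℂ :=
  a ^ (t 0 + t 1) *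
    q ^ ((t 0) ^ 2 + (t 1) ^ 2 + t 1 + ∑ m ∈ Finset.Ico 2 (k + 1), 2 ^ (m - 2) * t m) /
    qPoch q q (t 0 - t 1) *
    ∏ j ∈ Finset.Ico 2 (k + 2),
      qPoch (-(a ^ 2 ^ (j - 2) * q ^ 2 ^ (j - 2))) (q ^ 2 ^ (j - 2)) (2 * t j) /
        qPoch (q ^ 2 ^ (j - 1)) (q ^ 2 ^ (j - 1)) (t (j - 1) - t j)

theorem bF_succ (k : ℕ) (a q : ℂ) (t : ℕ → ℕ) :
    bF (k+1) a q t = a^(t 0) * q^(t 0^2) * (a^(t 1) * q^(t 1^2) / qPoch q q (t 0 - t 1) *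
      bW k a q (fun m => t (m+1))) := by
  rw [bF, bW, Finset.sum_Ico_eq_sum_range, Finset.prod_Ico_eq_prod_range]
  have e1 : k + 1 + 1 - 2 = k := by omega
  have e2 : k + 1 + 2 - 2 = k + 1 := by omega
  have e3 : ∀ i, 2 + i - 2 = i := by intro i; omega
  have e4 : ∀ i, 2 + i - 1 = i + 1 := by intro i; omega
  have e5 : ∀ i, 2 + i = i + 1 + 1 := by intro i; omega
  simp only [e1, e2, e3, e4]
  simp only [e5]
  simp only [zero_add]
  ring

theorem fiber_sum (k n : ℕ) (a q : ℂ) :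
    ∑ s ∈ bT k n, bF k a q (bPad k s) = a^n * q^(n^2) *
      ∑ m ∈ Finset.range (n+1), a^m * q^(m^2) / qPoch q q (n-m) * bMf k m a q := by
  cases k with
  | zero =>
    rw [sum_bT_zero, Finset.sum_eq_single 0]
    · simp [bF, bMf, bPad]
      ring
    · intro m _ hm
      simp [bMf, hm]
    · simp
  | succ k =>
    rw [sum_bT_succ, Finset.mul_sum]
    refine Finset.sum_congr rfl fun m hm => ?_
    rw [bMf_eq, Finset.mul_sum, Finset.mul_sum]
    refine Finset.sum_congr rfl fun s hs => ?_
    rw [mem_bT] at hs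
    have h0 : bPad (k+1) (Fin.cons n s : Fin (k+2) → ℕ) 0 = n := by rw [bPad_zero]; rfl
    have h1 : bPad (k+1) (Fin.cons n s : Fin (k+2) → ℕ) 1 = m := by
      rw [bPad_cons_succ, bPad_zero, hs.2]
    rw [bF_succ, h0, h1]
    simp only [bPad_cons_succ]

open Filter Topology in
theorem qPoch_tendsto (x : ℂ) {q : ℂ} (h1 : ‖q‖ < 1) :
    Tendsto (qPoch x q) atTop (𝓝 (qPochInf x q)) := by
  have hs : Summable (fun j : ℕ => ‖-(x * q^j)‖) := by
    simp only [norm_neg, norm_mul, norm_pow]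
    exact (summable_geometric_of_lt_one (norm_nonneg _) h1).mul_left _
  have := (multipliable_one_add_of_summable hs).hasProd.tendsto_prod_nat
  simpa only [← sub_eq_add_neg] using! this

theorem qPochInf_ne_zero {x q : ℂ} (h1 : ‖q‖ < 1) (h : ∀ j : ℕ, x * q^j ≠ 1) :
    qPochInf x q ≠ 0 := by
  have hs : Summable (fun j : ℕ => ‖-(x * q^j)‖) := by
    simp only [norm_neg, norm_mul, norm_pow]
    exact (summable_geometric_of_lt_one (norm_nonneg _) h1).mul_left _
  have := tprod_one_add_ne_zero_of_summable (f := fun j : ℕ => -(x * q^j)) (fun i => by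
    rw [← sub_eq_add_neg, sub_ne_zero]; exact (h i).symm) hs
  simpa only [← sub_eq_add_neg] using! this

open Filter Topology in
theorem tendsto_bdd {u : ℕ → ℂ} {l : ℂ} (h : Tendsto u atTop (𝓝 l)) :
    ∃ C : ℝ, 0 ≤ C ∧ ∀ n, ‖u n‖ ≤ C := by
  obtain ⟨C, hC⟩ := (Metric.isBounded_range_of_tendsto u h).exists_norm_le
  exact ⟨C, (norm_nonneg _).trans (hC (u 0) ⟨0, rfl⟩), fun n => hC _ ⟨n, rfl⟩⟩

theorem qPoch_bdd (x : ℂ) {q : ℂ} (h1 : ‖q‖ < 1) : ∃ C : ℝ, 0 ≤ C ∧ ∀ n, ‖qPoch x q n‖ ≤ C :=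
  tendsto_bdd (qPoch_tendsto x h1)

theorem qPoch_inv_bdd {x q : ℂ} (h1 : ‖q‖ < 1) (h : ∀ j : ℕ, x * q^j ≠ 1) :
    ∃ C : ℝ, 0 ≤ C ∧ ∀ n, ‖(qPoch x q n)⁻¹‖ ≤ C :=
  tendsto_bdd ((qPoch_tendsto x h1).inv₀ (qPochInf_ne_zero h1 h))

theorem qq_h {q : ℂ} (h1 : ‖q‖ < 1) (j : ℕ) : q * q^j ≠ 1 := by
  rw [← pow_succ']
  exact qpow_ne_one h1 _ (by omega)

open Filter Topology in
theorem summable_theta (B x : ℝ) (hB : 0 ≤ B) (hx0 : 0 ≤ x) (hx : x < 1) :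
    Summable (fun n : ℕ => B^n * x^(n^2)) := by
  have h1 : Tendsto (fun n : ℕ => B * x^n) atTop (𝓝 (B * 0)) :=
    (tendsto_pow_atTop_nhds_zero_of_lt_one hx0 hx).const_mul B
  rw [mul_zero] at h1
  have h2 : ∀ᶠ n : ℕ in atTop, B * x^n < 1/2 := h1.eventually_lt_const (by norm_num)
  refine Summable.of_norm_bounded_eventually_nat (g := fun n : ℕ => (1/2 : ℝ)^n)
    (summable_geometric_of_lt_one (by norm_num) (by norm_num)) ?_
  filter_upwards [h2] with n hn
  rw [Real.norm_of_nonneg (by positivity), pow_two, pow_mul, ← mul_pow]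
  exact pow_le_pow_left₀ (by positivity) hn.le n

open Filter Topology in
theorem tannery (f : ℕ → ℂ) (hf : Summable f) (w : ℕ → ℕ → ℂ) (C : ℝ)
    (hw : ∀ N s, ‖w N s‖ ≤ C) (L : ℂ) (hL : ∀ s, Tendsto (fun N => w N s) atTop (𝓝 L)) :
    Tendsto (fun N => ∑ s ∈ Finset.range (N+1), f s * w N s) atTop (𝓝 ((∑' s, f s) * L)) := by
  rw [← tsum_mul_right]
  have e : ∀ N, ∑ s ∈ Finset.range (N+1), f s * w N s
      = ∑' s, if s ∈ Finset.range (N+1) then f s * w N s else 0 := by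
    intro N
    rw [tsum_eq_sum (s := Finset.range (N+1))]
    · exact Finset.sum_congr rfl fun s hs => by rw [if_pos hs]
    · intro s hs; rw [if_neg hs]
  simp only [e]
  refine tendsto_tsum_of_dominated_convergence (bound := fun s => ‖f s‖ * C)
    (hf.norm.mul_right C) ?_ ?_
  · intro s
    have : Tendsto (fun N => f s * w N s) atTop (𝓝 (f s * L)) := (hL s).const_mul _
    refine this.congr' ?_
    filter_upwards [eventually_ge_atTop s] with N hN
    rw [if_pos (by rw [Finset.mem_range]; omega)]
  · refine Eventually.of_forall fun N s => ?_
    have hC : 0 ≤ C := (norm_nonneg _).trans (hw 0 0)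
    split_ifs
    · rw [norm_mul]; exact mul_le_mul_of_nonneg_left (hw N s) (norm_nonneg _)
    · rw [norm_zero]; positivity

theorem bF_bound (k : ℕ) (a q : ℂ) (h1 : ‖q‖ < 1) :
    ∃ C : ℝ, 0 ≤ C ∧ ∀ t : ℕ → ℕ, Antitone t →
      ‖bF k a q t‖ ≤ C * (((max 1 ‖a‖)^2)^(t 0) * ‖q‖^((t 0)^2)) := by
  have hp : ∀ j : ℕ, ‖q^2^j‖ < 1 := fun j => by
    rw [norm_pow]; exact pow_lt_one₀ (norm_nonneg _) h1 (by positivity)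
  have hb1 := fun j : ℕ => qPoch_bdd (-(a ^ 2 ^ (j - 2) * q ^ 2 ^ (j - 2))) (hp (j-2))
  have hb2 := fun j : ℕ => qPoch_inv_bdd (hp (j-1)) (qq_h (hp (j-1)))
  choose C1 hC1 hC1' using hb1
  choose C2 hC2 hC2' using hb2
  obtain ⟨C0, hC0, hC0'⟩ := qPoch_inv_bdd h1 (qq_h h1)
  refine ⟨C0 * ∏ j ∈ Finset.Ico 2 (k+2), C1 j * C2 j,
    mul_nonneg hC0 (Finset.prod_nonneg fun j _ => mul_nonneg (hC1 j) (hC2 j)), ?_⟩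
  intro t ht
  have hP : ‖∏ j ∈ Finset.Ico 2 (k + 2),
      qPoch (-(a ^ 2 ^ (j - 2) * q ^ 2 ^ (j - 2))) (q ^ 2 ^ (j - 2)) (2 * t j) /
        qPoch (q ^ 2 ^ (j - 1)) (q ^ 2 ^ (j - 1)) (t (j - 1) - t j)‖
      ≤ ∏ j ∈ Finset.Ico 2 (k+2), C1 j * C2 j := by
    rw [norm_prod]
    refine Finset.prod_le_prod (fun _ _ => norm_nonneg _) fun j _ => ?_
    rw [div_eq_mul_inv, norm_mul]
    exact mul_le_mul (hC1' j _) (hC2' j _) (norm_nonneg _) (hC1 j)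
  have hA : ‖a‖^(t 0 + t 1) ≤ ((max 1 ‖a‖)^2)^(t 0) := by
    rw [← pow_mul]
    refine (pow_le_pow_left₀ (norm_nonneg _) (le_max_right 1 ‖a‖) _).trans ?_
    refine pow_le_pow_right₀ (le_max_left _ _) ?_
    have := ht (Nat.zero_le 1)
    omega
  have hQ : ‖q‖^((t 0) ^ 2 + (t 1) ^ 2 + t 1 + ∑ m ∈ Finset.Ico 2 (k + 1), 2 ^ (m - 2) * t m)
      ≤ ‖q‖^((t 0)^2) := by
    refine pow_le_pow_of_le_one (norm_nonneg _) h1.le ?_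
    rw [add_assoc, add_assoc]
    exact Nat.le_add_right _ _
  rw [bF, norm_mul, div_eq_mul_inv, norm_mul, norm_mul, norm_pow, norm_pow]
  calc _ ≤ ((((max 1 ‖a‖)^2)^(t 0) * ‖q‖^((t 0)^2)) * C0) * ∏ j ∈ Finset.Ico 2 (k+2), C1 j * C2 j := by
        refine mul_le_mul (mul_le_mul (mul_le_mul hA hQ (by positivity) (by positivity)) (hC0' _)
          (norm_nonneg _) (by positivity)) hP (norm_nonneg _) (by positivity)
    _ = _ := by ring

noncomputable def bEquiv (k : ℕ) : (Σ n : ℕ, {s // s ∈ bT k n}) ≃ {s : Fin (k + 1) → ℕ // Antitone s} where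
  toFun p := ⟨p.2.1, (mem_bT.mp p.2.2).1⟩
  invFun s := ⟨s.1 0, ⟨s.1, mem_bT.mpr ⟨s.2, rfl⟩⟩⟩
  left_inv := by
    rintro ⟨n, s, hs⟩
    obtain ⟨h, rfl⟩ := mem_bT.mp hs
    rfl
  right_inv := by
    rintro ⟨s, hs⟩
    rfl

theorem bF_summable (k : ℕ) (a q : ℂ) (h1 : ‖q‖ < 1) :
    Summable (fun p : (Σ n : ℕ, {s // s ∈ bT k n}) => bF k a q (bPad k p.2.1)) := by
  apply Summable.of_norm
  rw [summable_sigma_of_nonneg (fun _ => norm_nonneg _)]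
  refine ⟨fun n => Summable.of_finite, ?_⟩
  obtain ⟨C, hC, hb⟩ := bF_bound k a q h1
  refine Summable.of_nonneg_of_le (fun n => tsum_nonneg fun _ => norm_nonneg _) ?_
    ((summable_theta (2^(k+1) * (max 1 ‖a‖)^2) ‖q‖ (by positivity) (norm_nonneg _) h1).mul_left C)
  intro n
  rw [tsum_fintype]
  have hb' : ∀ s ∈ (Finset.univ : Finset {s // s ∈ bT k n}), ‖bF k a q (bPad k s.1)‖ ≤
      C * (((max 1 ‖a‖)^2)^n * ‖q‖^(n^2)) := by
    rintro ⟨s, hs⟩ _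
    rw [mem_bT] at hs
    have := hb (bPad k s) (bPad_anti hs.1)
    rwa [bPad_zero, hs.2] at this
  refine (Finset.sum_le_card_nsmul _ _ _ hb').trans ?_
  rw [Finset.card_univ, Fintype.card_coe, nsmul_eq_mul]
  have hcard : ((bT k n).card : ℝ) ≤ (2^(k+1))^n := by
    have h2 : n + 1 ≤ 2^n := Nat.lt_two_pow_self
    have : (bT k n).card ≤ (2^(k+1))^n := by
      refine (card_bT k n).trans ((Nat.pow_le_pow_left h2 (k+1)).trans ?_)
      rw [← pow_mul, ← pow_mul, mul_comm]
    exact_mod_cast this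
  calc _ ≤ (2^(k+1))^n * (C * (((max 1 ‖a‖)^2)^n * ‖q‖^(n^2))) :=
        mul_le_mul_of_nonneg_right hcard (by positivity)
    _ = _ := by rw [mul_pow]; ring

theorem bU_bdd (a : ℂ) {q : ℂ} (h1 : ‖q‖ < 1) : ∃ C : ℝ, 0 ≤ C ∧ ∀ r, ‖bU a q r‖ ≤ C := by
  obtain ⟨C1, p1, hC1⟩ := qPoch_bdd a h1
  obtain ⟨C2, p2, hC2⟩ := qPoch_inv_bdd h1 (qq_h h1)
  refine ⟨C1 * (1 + ‖a‖) * 1 * 1 * (‖(1-a)⁻¹‖ * C2), by positivity, fun r => ?_⟩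
  have hq : ∀ n, ‖q^n‖ ≤ 1 := fun n => by
    rw [norm_pow]; exact pow_le_one₀ (norm_nonneg _) h1.le
  have h3 : ‖1 - a * q^(2*r)‖ ≤ 1 + ‖a‖ := by
    refine (norm_sub_le _ _).trans ?_
    rw [norm_one, norm_mul]
    have := mul_le_mul_of_nonneg_left (hq (2*r)) (norm_nonneg a)
    linarith
  have h4 : ‖(-1 : ℂ)^r‖ ≤ 1 := by simp
  rw [bU, div_eq_mul_inv, mul_inv, norm_mul, norm_mul, norm_mul, norm_mul, norm_mul]
  have := hC1 r
  have := hC2 r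
  have := hq (r*(r-1)/2)
  gcongr

theorem alpha_summable (a A Q : ℂ) {q : ℂ} (h1 : ‖q‖ < 1) (hQ : ‖Q‖ < 1) :
    Summable (fun r : ℕ => a^r * q^(r^2) * (a^r * q^(r^2) * bU A Q r)) := by
  obtain ⟨C, hC, hb⟩ := bU_bdd A hQ
  refine Summable.of_norm_bounded (g := fun r : ℕ => C * ((‖a‖^2)^r * ‖q‖^(r^2)))
    ((summable_theta (‖a‖^2) ‖q‖ (by positivity) (norm_nonneg _) h1).mul_left C) ?_
  intro r
  simp only [norm_mul, norm_pow]
  have h2 : ‖q‖^(r^2) ≤ 1 := pow_le_one₀ (norm_nonneg _) h1.le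
  calc _ = (‖a‖^2)^r * ‖q‖^(r^2) * (‖q‖^(r^2) * ‖bU A Q r‖) := by ring
    _ ≤ (‖a‖^2)^r * ‖q‖^(r^2) * (1 * C) := by
      have := hb r
      gcongr
    _ = _ := by ring

open Filter Topology in
theorem final_sum (k : ℕ) (q a : ℂ) (h0 : 0 < ‖q‖) (h1 : ‖q‖ < 1)
    (ha : ∀ n : ℕ, 1 ≤ n → a * q ^ n ≠ 1) (ha2 : a ^ (2 ^ k) ≠ 1) :
    (1 / qPochInf (a * q) q) *
      ∑' r : ℕ, a^r * q^(r^2) * (a^r * q^(r^2) * bU (a^2^k) (q^2^k) r)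
    = ∑' n : ℕ, ∑ s ∈ bT k n, bF k a q (bPad k s) := by
  have hqk : ‖q^2^k‖ < 1 := by
    rw [norm_pow]; exact pow_lt_one₀ (norm_nonneg _) h1 (by positivity)
  have haq : ∀ j : ℕ, a * q * q^j ≠ 1 := fun j => by
    rw [mul_assoc, ← pow_succ']; exact ha _ (by omega)
  have hfs : Summable (fun n : ℕ => ∑ s ∈ bT k n, bF k a q (bPad k s)) := by
    have := (bF_summable k a q h1).sigma
    refine this.congr fun n => ?_
    rw [tsum_fintype]
    exact Finset.sum_coe_sort (bT k n) (fun s => bF k a q (bPad k s))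
  have hfib : ∀ n, ∑ s ∈ bT k n, bF k a q (bPad k s) = a^n * q^(n^2) *
      bBeta (fun r => a^r * q^(r^2) * bU (a^2^k) (q^2^k) r) a q n := by
    intro n
    rw [fiber_sum, ← bailey1 h1 ha]
    simp only [main_beta' k a q h0 h1 ha ha2]
  obtain ⟨C1, p1, hC1⟩ := qPoch_inv_bdd h1 (qq_h h1)
  obtain ⟨C2, p2, hC2⟩ := qPoch_inv_bdd h1 haq
  have hinf1 := qPochInf_ne_zero h1 (qq_h h1)
  have hinf2 := qPochInf_ne_zero h1 haq
  have l1 := (qPoch_tendsto q h1).inv₀ hinf1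
  have l2 := (qPoch_tendsto (a*q) h1).inv₀ hinf2
  have t1 := tannery _ hfs (fun N s => (qPoch q q (N - s))⁻¹) C1 (fun N s => hC1 _) _
    (fun s => l1.comp (tendsto_sub_atTop_nat s))
  have t2 := tannery _ (alpha_summable a (a^2^k) (q^2^k) h1 hqk)
    (fun N s => (qPoch q q (N - s))⁻¹ * (qPoch (a*q) q (N + s))⁻¹) (C1*C2)
    (fun N s => by rw [norm_mul]; exact mul_le_mul (hC1 _) (hC2 _) (norm_nonneg _) p1) _
    (fun s => (l1.comp (tendsto_sub_atTop_nat s)).mul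
      (l2.comp (tendsto_atTop_mono (fun N => Nat.le_add_right N s) tendsto_id)))
  have heq : ∀ N, ∑ s ∈ Finset.range (N+1), (∑ s ∈ bT k s, bF k a q (bPad k s)) * (qPoch q q (N - s))⁻¹
      = ∑ r ∈ Finset.range (N+1), a^r * q^(r^2) * (a^r * q^(r^2) * bU (a^2^k) (q^2^k) r) *
        ((qPoch q q (N - r))⁻¹ * (qPoch (a*q) q (N + r))⁻¹) := by
    intro N
    have := bailey1 h1 ha (fun r => a^r * q^(r^2) * bU (a^2^k) (q^2^k) r) N
    rw [bBeta] at this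
    simp only [div_eq_mul_inv, mul_inv] at this
    rw [← this]
    refine Finset.sum_congr rfl fun s _ => ?_
    rw [hfib]
    ring
  have := tendsto_nhds_unique t1 (t2.congr fun N => (heq N).symm)
  field_simp at this ⊢
  rw [← this]

theorem theorem_4_3 (k : ℕ) (q a : ℂ)
    (h0 : 0 < ‖q‖) (h1 : ‖q‖ < 1)
    (ha : ∀ n : ℕ, 1 ≤ n → a * q ^ n ≠ 1)
    (ha2 : a ^ (2 ^ k) ≠ 1) :
    (1 / qPochInf (a * q) q) *
      (∑' r : ℕ, a ^ (2 * r) * q ^ (2 * r ^ 2 + 2 ^ k * (r * (r - 1) / 2)) *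
        (1 - a ^ (2 ^ k) * q ^ (r * 2 ^ (k + 1))) * qPoch (a ^ (2 ^ k)) (q ^ (2 ^ k)) r *
        (-1) ^ r / ((1 - a ^ (2 ^ k)) * qPoch (q ^ (2 ^ k)) (q ^ (2 ^ k)) r)) =
    ∑' s : {s : Fin (k + 1) → ℕ // Antitone s},
      (let t : ℕ → ℕ := fun m => if h : m < k + 1 then s.1 ⟨m, h⟩ else 0
       a ^ (t 0 + t 1) *
         q ^ ((t 0) ^ 2 + (t 1) ^ 2 + t 1 + ∑ m ∈ Finset.Ico 2 (k + 1), 2 ^ (m - 2) * t m) /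
         qPoch q q (t 0 - t 1) *
         ∏ j ∈ Finset.Ico 2 (k + 2),
           qPoch (-(a ^ 2 ^ (j - 2) * q ^ 2 ^ (j - 2))) (q ^ 2 ^ (j - 2)) (2 * t j) /
             qPoch (q ^ 2 ^ (j - 1)) (q ^ 2 ^ (j - 1)) (t (j - 1) - t j)) := by
  have hR : ∑' s : {s : Fin (k + 1) → ℕ // Antitone s}, bF k a q (bPad k s.1)
      = ∑' n : ℕ, ∑ s ∈ bT k n, bF k a q (bPad k s) := by
    rw [← (bEquiv k).tsum_eq]
    have hs := bF_summable k a q h1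
    refine (hs.tsum_sigma).trans ?_
    refine tsum_congr fun n => ?_
    rw [tsum_fintype]
    exact Finset.sum_coe_sort (bT k n) (fun s => bF k a q (bPad k s))
  refine Eq.trans ?_ hR.symm
  rw [← final_sum k q a h0 h1 ha ha2]
  congr 1
  refine tsum_congr fun r => ?_
  have e1 : q ^ (2 * r ^ 2 + 2 ^ k * (r * (r - 1) / 2))
      = q^(r^2) * q^(r^2) * (q^2^k)^(r * (r - 1) / 2) := by
    rw [← pow_mul]; ring
  have e2 : q ^ (r * 2 ^ (k + 1)) = (q^2^k)^(2*r) := by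
    rw [← pow_mul]; congr 1; ring
  rw [bU, e1, e2]
  ring
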